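/- Define ψ_3^2 := i Σ_{q+1≤k≤n, 1≤j,s≤q} c_{e_k, e_j+e_s} [|λ_j||λ_s|/(|λ_k|+|λ_j|+|λ_s|)]·(1/(|λ_j|+|λ_k|) + 1/(|λ_k|+|λ_s|)) z̄_k w_j w_s − i Σ_{1≤k≤q, q+1≤j,s≤n} c_{e_j+e_s, e_k} [|λ_j||λ_s|/(|λ_k|+|λ_j|+|λ_s|)]·(1/(|λ_j|+|λ_k|) + 1/(|λ_k|+|λ_s|)) z_k w̄_j w̄_s + i Σ_{q+1≤s,k≤n, 1≤j≤q} c_{e_s+e_k, e_j} [2|λ_j||λ_k|/((|λ_s|+|λ_j|)(|λ_s|+|λ_j|+|λ_k|))] z̄_s w̄_k w_j − i Σ_{q+1≤k≤n, 1≤j,s≤q} c_{e_k, e_s+e_j} [2|λ_j||λ_k|/((|λ_s|+|λ_k|)(|λ_s|+|λ_j|+|λ_k|))] z_s w̄_k w_j, where e_j denotes the j-th standard unit multiindex. Then T ψ_3^2 = Σ_{j=1}^q 2i|λ_j| w_j ∂ψ_3^1/∂z_j + Σ_{j=q+1}^n 2i|λ_j| w̄_j ∂ψ_3^1/∂z̄_j.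 -/

import Mathlib

/-!
Statement 0: the action of the derivation
`T = Σ_{j≤q} 2i|λ_j| z_j ∂/∂z_j + Σ_{j>q} 2i|λ_j| z̄_j ∂/∂z̄_j`
on the polynomial ring over ℂ in the 4n formal variables
`z_1,…,z_n, z̄_1,…,z̄_n, w_1,…,w_n, w̄_1,…,w̄_n`, at the level of coefficients.
We encode the variables as `Fin 4 × Fin n`, where `(0,j) = z_j`, `(1,j) = z̄_j`,
`(2,j) = w_j`, `(3,j) = w̄_j`.
-/

open MvPolynomial

attribute [local instance] Classical.propDecidable

noncomputable section

abbrev Var (n : ℕ) := Fin 4 × Fin n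

def zV {n : ℕ} (j : Fin n) : Var n := (0, j)
def zbV {n : ℕ} (j : Fin n) : Var n := (1, j)
def wV {n : ℕ} (j : Fin n) : Var n := (2, j)
def wbV {n : ℕ} (j : Fin n) : Var n := (3, j)

/-- The derivation `T = Σ_{1≤j≤q} 2i|λ_j| z_j ∂/∂z_j + Σ_{q+1≤j≤n} 2i|λ_j| z̄_j ∂/∂z̄_j`. -/
def Tder {n : ℕ} (q : ℕ) (lam : Fin n → ℝ) (g : MvPolynomial (Var n) ℂ) :
    MvPolynomial (Var n) ℂ :=
  ∑ j : Fin n,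
    if (j : ℕ) < q then
      C (2 * Complex.I * ((|lam j| : ℝ) : ℂ)) * X (zV j) * pderiv (zV j) g
    else
      C (2 * Complex.I * ((|lam j| : ℝ) : ℂ)) * X (zbV j) * pderiv (zbV j) g

/-- The exponent function of the monomial `z̄^α z^β w̄^γ w^δ`. -/
def mIdx {n : ℕ} (α β γ δ : Fin n → ℕ) : Var n →₀ ℕ :=
  Finsupp.equivFunOnFinite.symm fun v =>
    if v.1 = 0 then β v.2
    else if v.1 = 1 then α v.2
    else if v.1 = 2 then δ v.2
    else γ v.2

/-- The condition `(α'', β') = (0,0)`. -/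
def cond0 {n : ℕ} (q : ℕ) (α β : Fin n → ℕ) : Prop :=
  ∀ j : Fin n, (q ≤ (j : ℕ) → α j = 0) ∧ ((j : ℕ) < q → β j = 0)

/-- `⟨|λ''|, α''⟩ + ⟨|λ'|, β'⟩`. -/
def wgt {n : ℕ} (q : ℕ) (lam : Fin n → ℝ) (α β : Fin n → ℕ) : ℝ :=
  ∑ j : Fin n, if (j : ℕ) < q then |lam j| * β j else |lam j| * α j

/-- `⟨|λ''|, α''⟩`. -/
def wA {n : ℕ} (q : ℕ) (lam : Fin n → ℝ) (α : Fin n → ℕ) : ℝ :=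
  ∑ j : Fin n, if q ≤ (j : ℕ) then |lam j| * α j else 0

/-- `⟨|λ'|, β'⟩`. -/
def wB {n : ℕ} (q : ℕ) (lam : Fin n → ℝ) (β : Fin n → ℕ) : ℝ :=
  ∑ j : Fin n, if (j : ℕ) < q then |lam j| * β j else 0

/-- `α! = α_1! ⋯ α_n!`. -/
def factM {n : ℕ} (α : Fin n → ℕ) : ℕ := ∏ j : Fin n, (α j).factorial

/-- The `j`-th standard unit multiindex. -/
def eIdx {n : ℕ} (j : Fin n) : Fin n → ℕ := fun t => if t = j then 1 else 0

/-- The polynomial `ψ₃²` of Statement 4 (an explicit finite sum). -/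
def psi32 {n : ℕ} (q : ℕ) (lam : Fin n → ℝ) (c : (Fin n → ℕ) → (Fin n → ℕ) → ℂ) :
    MvPolynomial (Var n) ℂ :=
  C Complex.I *
    (∑ k : Fin n, ∑ j : Fin n, ∑ s : Fin n,
      if q ≤ (k : ℕ) ∧ (j : ℕ) < q ∧ (s : ℕ) < q then
        C (c (eIdx k) (fun t => eIdx j t + eIdx s t)) *
        C (((|lam j| * |lam s| / (|lam k| + |lam j| + |lam s|)) *
            (1 / (|lam j| + |lam k|) + 1 / (|lam k| + |lam s|)) : ℝ) : ℂ) *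
        (X (zbV k) * X (wV j) * X (wV s))
      else 0)
  - C Complex.I *
    (∑ k : Fin n, ∑ j : Fin n, ∑ s : Fin n,
      if (k : ℕ) < q ∧ q ≤ (j : ℕ) ∧ q ≤ (s : ℕ) then
        C (c (fun t => eIdx j t + eIdx s t) (eIdx k)) *
        C (((|lam j| * |lam s| / (|lam k| + |lam j| + |lam s|)) *
            (1 / (|lam j| + |lam k|) + 1 / (|lam k| + |lam s|)) : ℝ) : ℂ) *
        (X (zV k) * X (wbV j) * X (wbV s))
      else 0)
  + C Complex.I *
    (∑ s : Fin n, ∑ k : Fin n, ∑ j : Fin n,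
      if q ≤ (s : ℕ) ∧ q ≤ (k : ℕ) ∧ (j : ℕ) < q then
        C (c (fun t => eIdx s t + eIdx k t) (eIdx j)) *
        C ((2 * |lam j| * |lam k| /
            ((|lam s| + |lam j|) * (|lam s| + |lam j| + |lam k|)) : ℝ) : ℂ) *
        (X (zbV s) * X (wbV k) * X (wV j))
      else 0)
  - C Complex.I *
    (∑ k : Fin n, ∑ j : Fin n, ∑ s : Fin n,
      if q ≤ (k : ℕ) ∧ (j : ℕ) < q ∧ (s : ℕ) < q then
        C (c (eIdx k) (fun t => eIdx s t + eIdx j t)) *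
        C ((2 * |lam j| * |lam k| /
            ((|lam s| + |lam k|) * (|lam s| + |lam j| + |lam k|)) : ℝ) : ℂ) *
        (X (zV s) * X (wbV k) * X (wV j))
      else 0)

/-!
Let `μ` be `|λ|` on the first `q` indices and `0` on the others, and let `ν` be `|λ|` on the
remaining indices and `0` on the first `q`. With these weights both operators take the form
`∑ 2i μ_j a_j ∂/∂z_j + ∑ 2i ν_j b_j ∂/∂z̄_j`, and all summation ranges can be extended to the full
index set, because the coefficients vanish outside them. The identity then holds for arbitrary
nonnegative weights: each side is a sum of cubic terms `x_k u_j v_s`, the operator `T` multiplies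
such a term by `2i μ_k` or `2i ν_k`, and comparing coefficients leaves two rational identities.

* For `z̄ w w` and `z w̄ w̄`, one first symmetrizes in the two `w`-indices; what remains is
  `2a · bb' / (a + b + b') · (1 / (b + a) + 1 / (a + b')) = b' K(a, b', b) + b K(a, b, b')`
  with `K(a, b, m) = 2ma / ((a + b)(a + b + m))`.
* For `z w̄ w` and `z̄ w w̄`, two terms of the right-hand side combine through
  `b K(a + b, 0, d) - d K(d, a, b) = a K(d, a, b)`.
-/

section CubicSums

variable {ι σ R : Type*} [Fintype ι] [CommSemiring R]

/-- The polynomial `∑ a_{kj} x_k u_j` with variables drawn from the families `x` and `u`. -/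
def bilinearSum (a : ι → ι → R) (x u : ι → σ) : MvPolynomial σ R :=
  ∑ k, ∑ j, C (a k j) * (X (x k) * X (u j))

/-- The polynomial `∑ a_{kjs} x_k u_j v_s` with variables drawn from the families `x`, `u`, `v`.
Both sides of the theorem are combinations of such sums, so it reduces to identities between the
coefficient arrays `a`. -/
def cubicSum (a : ι → ι → ι → R) (x u v : ι → σ) : MvPolynomial σ R :=
  ∑ k, ∑ j, ∑ s, C (a k j s) * (X (x k) * X (u j) * X (v s))

lemma bilinearSum_zero (x u : ι → σ) : bilinearSum (fun _ _ => (0 : R)) x u = 0 := by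
  simp [bilinearSum]

lemma cubicSum_neg {R : Type*} [CommRing R] (a : ι → ι → ι → R) (x u v : ι → σ) :
    cubicSum (fun k j s => -a k j s) x u v = -cubicSum a x u v := by
  simp only [cubicSum, C_neg, neg_mul, Finset.sum_neg_distrib]

variable (a b : ι → ι → ι → R) (x u v : ι → σ)

lemma cubicSum_add :
    cubicSum a x u v + cubicSum b x u v = cubicSum (fun k j s => a k j s + b k j s) x u v := by
  simp only [cubicSum, C_add, add_mul, Finset.sum_add_distrib]

lemma cubicSum_swap : cubicSum a x u v = cubicSum (fun k j s => a k s j) x v u := by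
  refine Finset.sum_congr rfl fun k _ => ?_
  rw [Finset.sum_comm]
  simp only [mul_right_comm]

lemma cubicSum_add_swap :
    cubicSum (fun k j s => a k j s + a k s j) x u u =
      cubicSum (fun k j s => 2 * a k j s) x u u := by
  rw [← cubicSum_add, cubicSum_swap (fun k j s => a k s j), cubicSum_add]
  simp only [two_mul]

lemma C_mul_sum_ite_eq_cubicSum (r : R) (P : ι → ι → ι → Prop)
    [∀ k j s, Decidable (P k j s)] :
    C r * ∑ k, ∑ j, ∑ s,
        (if P k j s then C (a k j s) * C (b k j s) * (X (x k) * X (u j) * X (v s)) else 0) =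
      cubicSum (fun k j s => r * a k j s * if P k j s then b k j s else 0) x u v := by
  simp only [cubicSum, Finset.mul_sum]
  congr! 3 with k _ j _ s _
  split_ifs
  · simp only [C_mul, mul_assoc]
  · simp only [mul_zero, C_0, zero_mul]

lemma sum_mul_bilinearSum (r : ι → R) :
    ∑ s, C (r s) * X (v s) * bilinearSum (fun k j => a k j s) x u =
      cubicSum (fun k j s => r s * a k j s) x u v := by
  simp only [bilinearSum, cubicSum, Finset.mul_sum]
  rw [← Finset.sum_comm_cycle]
  refine Finset.sum_congr rfl fun k _ => Finset.sum_congr rfl fun j _ =>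
    Finset.sum_congr rfl fun s _ => ?_
  rw [C_mul]
  ring

lemma derivation_cubicSum (D : Derivation R (MvPolynomial σ R) (MvPolynomial σ R)) {r : ι → R}
    {x u v : ι → σ} (hx : ∀ k, D (X (x k)) = C (r k) * X (x k)) (hu : ∀ j, D (X (u j)) = 0)
    (hv : ∀ s, D (X (v s)) = 0) :
    D (cubicSum a x u v) = cubicSum (fun k j s => r k * a k j s) x u v := by
  simp only [cubicSum, map_sum]
  refine Finset.sum_congr rfl fun k _ => Finset.sum_congr rfl fun j _ =>
    Finset.sum_congr rfl fun s _ => ?_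
  simp only [Derivation.leibniz, derivation_C, hx, hu, hv, smul_eq_mul, C_mul]
  ring

lemma eq_sum_monomial {κ : Type*} [Fintype κ] {m : κ → σ →₀ ℕ} (hm : Function.Injective m)
    {p : MvPolynomial σ R} (hp : ∀ d, coeff d p ≠ 0 → d ∈ Set.range m) :
    p = ∑ i, monomial (m i) (coeff (m i) p) := by
  classical
  ext d
  simp only [coeff_sum, coeff_monomial]
  by_cases hd : d ∈ Set.range m
  · obtain ⟨i, rfl⟩ := hd
    simp [hm.eq_iff]
  · rw [of_not_not (mt (hp d) hd), Finset.sum_eq_zero fun i _ => if_neg fun hi => hd ⟨i, hi⟩]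

lemma single_add_single_injective {κ τ : Type*} {f : κ → σ} {g : τ → σ}
    (hf : Function.Injective f) (hg : Function.Injective g) (hfg : ∀ i j, f i ≠ g j) :
    Function.Injective fun i : κ × τ =>
      (Finsupp.single (f i.1) 1 + Finsupp.single (g i.2) 1 : σ →₀ ℕ) := by
  rintro ⟨i, j⟩ ⟨i', j'⟩ h
  have h' := (Finsupp.single_add_single_eq_single_add_single one_ne_zero one_ne_zero).1 h
  simp only [hfg, hg.eq_iff, hf.eq_iff] at h'
  grind

end CubicSums

section MultiIndices

variable {n : ℕ}

lemma eIdx_eq_single (k : Fin n) : eIdx k = Pi.single k 1 := by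
  funext t
  simp [eIdx, Pi.single_apply]

lemma eIdx_injective : Function.Injective (eIdx : Fin n → Fin n → ℕ) := fun i j h => by
  simpa [eIdx] using congrFun h i

lemma eIdx_ne_zero (j : Fin n) : eIdx j ≠ 0 := fun h => by
  simpa [eIdx] using congrFun h j

lemma sum_eIdx (k : Fin n) : ∑ t, eIdx k t = 1 := by
  simp [eIdx]

lemma sum_add_eIdx (α : Fin n → ℕ) (s : Fin n) : ∑ t, (α + eIdx s) t = (∑ t, α t) + 1 := by
  simp only [Pi.add_apply, Finset.sum_add_distrib, sum_eIdx]

lemma exists_eq_eIdx_of_sum_eq_one {α : Fin n → ℕ} (h : ∑ t, α t = 1) : ∃ k, α = eIdx k := by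
  obtain ⟨k, hk⟩ := (Finsupp.sum_eq_one_iff (Finsupp.equivFunOnFinite.symm α)).1
    (by simpa [Finsupp.sum_fintype] using h)
  refine ⟨k, funext fun t => ?_⟩
  have := DFunLike.congr_fun hk t
  simpa [Finsupp.single_apply, eIdx, eq_comm] using this

lemma exists_eq_eIdx_of_sum_add_sum_eq_one {α β : Fin n → ℕ}
    (h : (∑ t, α t) + (∑ t, β t) = 1) :
    (∃ k, α = eIdx k ∧ β = 0) ∨ ∃ k, α = 0 ∧ β = eIdx k := by
  have eq_zero {f : Fin n → ℕ} (hf : ∑ t, f t = 0) : f = 0 :=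
    funext fun t => Finset.sum_eq_zero_iff.1 hf t (Finset.mem_univ t)
  rcases Nat.add_eq_one_iff.1 h with ⟨hα, hβ⟩ | ⟨hα, hβ⟩
  · obtain ⟨k, rfl⟩ := exists_eq_eIdx_of_sum_eq_one hβ
    exact Or.inr ⟨k, eq_zero hα, rfl⟩
  · obtain ⟨k, rfl⟩ := exists_eq_eIdx_of_sum_eq_one hα
    exact Or.inl ⟨k, rfl, eq_zero hβ⟩

lemma factM_eq_one_of_sum_le_one {α : Fin n → ℕ} (h : ∑ t, α t ≤ 1) : factM α = 1 :=
  Finset.prod_eq_one fun t _ => Nat.factorial_eq_one.2 <|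
    (Finset.single_le_sum (fun _ _ => Nat.zero_le _) (Finset.mem_univ t)).trans h

lemma factM_add_eIdx (α : Fin n → ℕ) (s : Fin n) : factM (α + eIdx s) = factM α * (α s + 1) := by
  have h (t : Fin n) :
      ((α + eIdx s) t).factorial = (α t).factorial * if t = s then α s + 1 else 1 := by
    by_cases hts : t = s
    · simp [eIdx, hts, Nat.factorial_succ, mul_comm]
    · simp [eIdx, hts]
  simp only [factM, h, Finset.prod_mul_distrib, Finset.prod_ite_eq', Finset.mem_univ, if_true]

/-- The pairing `⟨μ, α⟩` of a weight vector with a multiindex. -/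
def pairing (μ : Fin n → ℝ) (α : Fin n → ℕ) : ℝ := ∑ t, μ t * α t

lemma pairing_zero (μ : Fin n → ℝ) : pairing μ 0 = 0 := by
  simp [pairing]

lemma pairing_add (μ : Fin n → ℝ) (α β : Fin n → ℕ) :
    pairing μ (α + β) = pairing μ α + pairing μ β := by
  simp [pairing, mul_add, Finset.sum_add_distrib]

lemma pairing_eIdx (μ : Fin n → ℝ) (k : Fin n) : pairing μ (eIdx k) = μ k := by
  simp [pairing, eIdx]

lemma mIdx_add (α β γ δ α' β' γ' δ' : Fin n → ℕ) :
    mIdx α β γ δ + mIdx α' β' γ' δ' = mIdx (α + α') (β + β') (γ + γ') (δ + δ') := by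
  ext ⟨i, t⟩
  fin_cases i <;> simp [mIdx]

lemma mIdx_zbV (k : Fin n) : mIdx (eIdx k) 0 0 0 = Finsupp.single (zbV k) 1 := by
  ext ⟨i, t⟩
  fin_cases i <;> simp [mIdx, zbV, eIdx_eq_single, Finsupp.single_apply, Pi.single_apply, eq_comm]

lemma mIdx_zV (k : Fin n) : mIdx 0 (eIdx k) 0 0 = Finsupp.single (zV k) 1 := by
  ext ⟨i, t⟩
  fin_cases i <;> simp [mIdx, zV, eIdx_eq_single, Finsupp.single_apply, Pi.single_apply, eq_comm]

lemma mIdx_wbV (k : Fin n) : mIdx 0 0 (eIdx k) 0 = Finsupp.single (wbV k) 1 := by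
  ext ⟨i, t⟩
  fin_cases i <;> simp [mIdx, wbV, eIdx_eq_single, Finsupp.single_apply, Pi.single_apply, eq_comm]

lemma mIdx_wV (k : Fin n) : mIdx 0 0 0 (eIdx k) = Finsupp.single (wV k) 1 := by
  ext ⟨i, t⟩
  fin_cases i <;> simp [mIdx, wV, eIdx_eq_single, Finsupp.single_apply, Pi.single_apply, eq_comm]

lemma exists_eq_mIdx (d : Var n →₀ ℕ) : ∃ α β γ δ, d = mIdx α β γ δ := by
  refine ⟨fun t => d (1, t), fun t => d (0, t), fun t => d (3, t), fun t => d (2, t), ?_⟩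
  ext ⟨i, t⟩
  fin_cases i <;> simp [mIdx]

end MultiIndices

section Bihomogeneous

variable {n : ℕ} {R : Type*} [CommSemiring R] {p : MvPolynomial (Var n) R} {a b : ℕ}

/-- `p` is homogeneous of degree `a` in the variables `z`, `z̄` and of degree `b` in the variables
`w`, `w̄`. -/
def IsBihomogeneous (p : MvPolynomial (Var n) R) (a b : ℕ) : Prop :=
  ∀ α β γ δ : Fin n → ℕ, coeff (mIdx α β γ δ) p ≠ 0 →
    (∑ t, α t) + (∑ t, β t) = a ∧ (∑ t, γ t) + (∑ t, δ t) = b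

lemma coeff_pderiv_zV (α β γ δ : Fin n → ℕ) (s : Fin n) :
    coeff (mIdx α β γ δ) (pderiv (zV s) p) =
      coeff (mIdx α (β + eIdx s) γ δ) p * (β s + 1) := by
  rw [coeff_pderiv, ← mIdx_zV, mIdx_add]
  simp [mIdx, zV]

lemma coeff_pderiv_zbV (α β γ δ : Fin n → ℕ) (s : Fin n) :
    coeff (mIdx α β γ δ) (pderiv (zbV s) p) =
      coeff (mIdx (α + eIdx s) β γ δ) p * (α s + 1) := by
  rw [coeff_pderiv, ← mIdx_zbV, mIdx_add]
  simp [mIdx, zbV]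

/- Differentiation absorbs the factorials: the factor `β_s + 1` is cancelled by `(β + e_s)!`, and
`α! β! = 1` when `|α| + |β| = 1`. -/
lemma coeff_pderiv_zV_of_factM {K : Type*} [Field K] [CharZero K]
    {p : MvPolynomial (Var n) K} {α β γ δ : Fin n → ℕ}
    (h : (∑ t, α t) + (∑ t, β t) = 1) {s : Fin n} {r x y : K}
    (hp : coeff (mIdx α (β + eIdx s) γ δ) p =
      r * (x / (factM α * factM (β + eIdx s) : ℕ)) * y) :
    coeff (mIdx α β γ δ) (pderiv (zV s) p) = r * x * y := by
  rw [coeff_pderiv_zV, hp, factM_add_eIdx, factM_eq_one_of_sum_le_one (α := α) (by omega),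
    factM_eq_one_of_sum_le_one (α := β) (by omega)]
  have : (β s + 1 : K) ≠ 0 := Nat.cast_add_one_ne_zero (β s)
  push_cast
  field_simp

lemma coeff_pderiv_zbV_of_factM {K : Type*} [Field K] [CharZero K]
    {p : MvPolynomial (Var n) K} {α β γ δ : Fin n → ℕ}
    (h : (∑ t, α t) + (∑ t, β t) = 1) {s : Fin n} {r x y : K}
    (hp : coeff (mIdx (α + eIdx s) β γ δ) p =
      r * (x / (factM (α + eIdx s) * factM β : ℕ)) * y) :
    coeff (mIdx α β γ δ) (pderiv (zbV s) p) = r * x * y := by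
  rw [coeff_pderiv_zbV, hp, factM_add_eIdx, factM_eq_one_of_sum_le_one (α := α) (by omega),
    factM_eq_one_of_sum_le_one (α := β) (by omega)]
  have : (α s + 1 : K) ≠ 0 := Nat.cast_add_one_ne_zero (α s)
  push_cast
  field_simp

lemma IsBihomogeneous.pderiv_zV (hp : IsBihomogeneous p (a + 1) b) (s : Fin n) :
    IsBihomogeneous (pderiv (zV s) p) a b := by
  intro α β γ δ h
  rw [coeff_pderiv_zV] at h
  have h' := hp _ _ _ _ (left_ne_zero_of_mul h)
  rw [sum_add_eIdx] at h'
  omega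

lemma IsBihomogeneous.pderiv_zbV (hp : IsBihomogeneous p (a + 1) b) (s : Fin n) :
    IsBihomogeneous (pderiv (zbV s) p) a b := by
  intro α β γ δ h
  rw [coeff_pderiv_zbV] at h
  have h' := hp _ _ _ _ (left_ne_zero_of_mul h)
  rw [sum_add_eIdx] at h'
  omega

lemma IsBihomogeneous.eq_bilinearSum (hp : IsBihomogeneous p 1 1) :
    p = bilinearSum (fun k j => coeff (mIdx (eIdx k) 0 0 (eIdx j)) p) zbV wV +
      bilinearSum (fun k j => coeff (mIdx (eIdx k) 0 (eIdx j) 0) p) zbV wbV +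
      bilinearSum (fun k j => coeff (mIdx 0 (eIdx k) 0 (eIdx j)) p) zV wV +
      bilinearSum (fun k j => coeff (mIdx 0 (eIdx k) (eIdx j) 0) p) zV wbV := by
  let m (i : (Fin n ⊕ Fin n) × (Fin n ⊕ Fin n)) : Var n →₀ ℕ :=
    Finsupp.single (Sum.elim zbV zV i.1) 1 + Finsupp.single (Sum.elim wbV wV i.2) 1
  have hm : Function.Injective m := by
    apply single_add_single_injective
    all_goals simp [Function.Injective, zV, zbV, wV, wbV]
  have hp_range : ∀ d, coeff d p ≠ 0 → d ∈ Set.range m := by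
    intro d hd
    obtain ⟨α, β, γ, δ, rfl⟩ := exists_eq_mIdx d
    obtain ⟨hαβ, hγδ⟩ := hp α β γ δ hd
    rcases exists_eq_eIdx_of_sum_add_sum_eq_one hαβ with ⟨k, rfl, rfl⟩ | ⟨k, rfl, rfl⟩ <;>
      rcases exists_eq_eIdx_of_sum_add_sum_eq_one hγδ with ⟨j, rfl, rfl⟩ | ⟨j, rfl, rfl⟩
    · exact ⟨(.inl k, .inl j), by simp [m, ← mIdx_zbV, ← mIdx_wbV, mIdx_add]⟩
    · exact ⟨(.inl k, .inr j), by simp [m, ← mIdx_zbV, ← mIdx_wV, mIdx_add]⟩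
    · exact ⟨(.inr k, .inl j), by simp [m, ← mIdx_zV, ← mIdx_wbV, mIdx_add]⟩
    · exact ⟨(.inr k, .inr j), by simp [m, ← mIdx_zV, ← mIdx_wV, mIdx_add]⟩
  have h_monomial (u v : Var n) (r : R) :
      monomial (Finsupp.single u 1 + Finsupp.single v 1) r = C r * (X u * X v) := by
    rw [X, X, monomial_mul, C_mul_monomial, one_mul, mul_one]
  conv_lhs => rw [eq_sum_monomial hm hp_range]
  simp only [m, h_monomial, Fintype.sum_prod_type, Fintype.sum_sum_type, Sum.elim_inl,
    Sum.elim_inr, bilinearSum, Finset.sum_add_distrib, ← mIdx_zV, ← mIdx_zbV, ← mIdx_wV,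
    ← mIdx_wbV, mIdx_add, add_zero, zero_add]
  ring

end Bihomogeneous

section Kernels

/-- The factor `2ma / ((a + b)(a + b + m))` in the coefficients of `ψ₃¹`. Where `ψ₃¹` has no term
we have `a = 0`, and the value is then `0`, also if `a + b = 0`. -/
def psi1Kernel (a b m : ℝ) : ℝ := 2 * m * a / ((a + b) * (a + b + m))

/-- The factor `bb' / (a + b + b') · (1 / (b + a) + 1 / (a + b'))` in the first two sums of `ψ₃²`.
These sums run over the indices with `a ≠ 0` only, hence the value `0` at `a = 0`. -/
def pureKernel (a b b' : ℝ) : ℝ :=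
  if a = 0 then 0 else b * b' / (a + b + b') * (1 / (b + a) + 1 / (a + b'))

/-- The factor `2ma / ((a + b)(a + b + m))` in the last two sums of `ψ₃²`. These sums run over the
indices with `b ≠ 0` only, hence the value `0` at `b = 0`. -/
def mixedKernel (a b m : ℝ) : ℝ := if b = 0 then 0 else psi1Kernel a b m

lemma psi1Kernel_zero_left (b m : ℝ) : psi1Kernel 0 b m = 0 := by
  simp [psi1Kernel]

lemma mul_mixedKernel (a b m : ℝ) : b * mixedKernel a b m = b * psi1Kernel a b m := by
  by_cases hb : b = 0 <;> simp [mixedKernel, hb]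

lemma two_mul_pureKernel (a b b' : ℝ) :
    2 * (a * pureKernel a b b') = b' * psi1Kernel a b' b + b * psi1Kernel a b b' := by
  by_cases ha : a = 0
  · simp [ha, psi1Kernel]
  · simp only [pureKernel, if_neg ha, psi1Kernel, div_eq_mul_inv, mul_inv]
    ring

lemma mul_psi1Kernel_zero {a b d : ℝ} (ha : 0 ≤ a) (hb : 0 ≤ b) (hd : 0 ≤ d) :
    b * psi1Kernel (a + b) 0 d = (a + d) * psi1Kernel d a b := by
  rcases hb.eq_or_lt with rfl | hb
  · simp [psi1Kernel]
  rcases hd.eq_or_lt with rfl | hd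
  · simp [psi1Kernel]
  rw [psi1Kernel, psi1Kernel]
  field_simp
  ring

variable {ι σ : Type*} [Fintype ι]

lemma cubicSum_pureKernel (μ ν : ι → ℝ) (d : ι → ι → ι → ℂ)
    (hd : ∀ k j s, d k j s = d k s j) (x u : ι → σ) :
    cubicSum (fun k j s => 2 * Complex.I * ν k * (Complex.I * d k j s *
        pureKernel (ν k) (μ j) (μ s))) x u u =
      cubicSum (fun k j s => 2 * Complex.I * μ s * (Complex.I * d k j s *
        psi1Kernel (ν k) (μ s) (μ j))) x u u := by
  let e (k j s : ι) : ℂ :=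
    Complex.I * Complex.I * d k j s * (μ s * psi1Kernel (ν k) (μ s) (μ j))
  calc
    _ = cubicSum (fun k j s => e k j s + e k s j) x u u := by
      congr! 4 with k j s
      have h := congrArg ((↑) : ℝ → ℂ) (two_mul_pureKernel (ν k) (μ j) (μ s))
      push_cast at h
      simp only [e, hd k s j]
      linear_combination Complex.I * Complex.I * d k j s * h
    _ = _ := by
      rw [cubicSum_add_swap]
      congr! 4 with k j s
      simp only [e]
      ring

lemma cubicSum_mixedKernel {μ ν : ι → ℝ} (hμ : 0 ≤ μ) (hν : 0 ≤ ν)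
    (d : ι → ι → ι → ℂ) (x u v : ι → σ) :
    cubicSum (fun k j s => 2 * Complex.I * μ k * (Complex.I * d k j s *
        mixedKernel (ν j) (μ k) (μ s))) x u v =
      cubicSum (fun k j s => 2 * Complex.I * μ s * (Complex.I * d k j s *
        psi1Kernel (μ k + μ s) 0 (ν j))) x u v -
      cubicSum (fun k j s => 2 * Complex.I * ν j * (Complex.I * d k j s *
        psi1Kernel (ν j) (μ k) (μ s))) x u v := by
  rw [eq_sub_iff_add_eq, cubicSum_add]
  congr! 4 with k j s
  have h_mixed := congrArg ((↑) : ℝ → ℂ) (mul_mixedKernel (ν j) (μ k) (μ s))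
  have h_zero := congrArg ((↑) : ℝ → ℂ) (mul_psi1Kernel_zero (hμ k) (hμ s) (hν j))
  push_cast at h_mixed h_zero
  linear_combination 2 * Complex.I * Complex.I * d k j s * (h_mixed - h_zero)

end Kernels

section Weights

variable {n : ℕ} (μ ν : Fin n → ℝ) (c : (Fin n → ℕ) → (Fin n → ℕ) → ℂ)

/-- The derivation `∑ 2i μ_j a_j ∂/∂z_j + ∑ 2i ν_j b_j ∂/∂z̄_j`, where `a` and `b` are families of
variables. The operator `T` is the case `a = z`, `b = z̄`, and the operator applied to `ψ₃¹` is the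
case `a = w`, `b = w̄`. -/
def weightedField (a b : Fin n → Var n) :
    Derivation ℂ (MvPolynomial (Var n) ℂ) (MvPolynomial (Var n) ℂ) :=
  ∑ j, ((C (2 * Complex.I * μ j) * X (a j)) • pderiv (zV j) +
    (C (2 * Complex.I * ν j) * X (b j)) • pderiv (zbV j))

lemma weightedField_apply (a b : Fin n → Var n) (p : MvPolynomial (Var n) ℂ) :
    weightedField μ ν a b p =
      ∑ j, C (2 * Complex.I * μ j) * X (a j) * pderiv (zV j) p +
        ∑ j, C (2 * Complex.I * ν j) * X (b j) * pderiv (zbV j) p := by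
  rw [weightedField, ← Derivation.coeFnAddMonoidHom_apply, map_sum, Finset.sum_apply,
    ← Finset.sum_add_distrib]
  rfl

lemma weightedField_zV (a b : Fin n → Var n) (k : Fin n) :
    weightedField μ ν a b (X (zV k)) = C (2 * Complex.I * μ k) * X (a k) := by
  simp [weightedField_apply, pderiv_X, Pi.single_apply, zV, zbV]

lemma weightedField_zbV (a b : Fin n → Var n) (k : Fin n) :
    weightedField μ ν a b (X (zbV k)) = C (2 * Complex.I * ν k) * X (b k) := by
  simp [weightedField_apply, pderiv_X, Pi.single_apply, zV, zbV]

lemma weightedField_wV (a b : Fin n → Var n) (k : Fin n) :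
    weightedField μ ν a b (X (wV k)) = 0 := by
  simp [weightedField_apply, pderiv_X, zV, zbV, wV]

lemma weightedField_wbV (a b : Fin n → Var n) (k : Fin n) :
    weightedField μ ν a b (X (wbV k)) = 0 := by
  simp [weightedField_apply, pderiv_X, zV, zbV, wbV]

/-- `ψ` is the polynomial `ψ₃¹` attached to the weights `μ` (for `z` and `w`) and `ν` (for `z̄` and
`w̄`). In the setting of the theorem `μ` is `|λ|` on the first `q` indices and `ν` is `|λ|` on the
others, both being `0` elsewhere; the vanishing of `psi1Kernel` then encodes the ranges of
summation. -/
structure IsPsi1 (ψ : MvPolynomial (Var n) ℂ) : Prop where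
  isBihomogeneous : IsBihomogeneous ψ 2 1
  coeff_wV (j : Fin n) (α β : Fin n → ℕ) (h : (∑ t, α t) + (∑ t, β t) = 2) :
    coeff (mIdx α β 0 (eIdx j)) ψ =
      Complex.I * (c α (β + eIdx j) / (factM α * factM β : ℕ)) *
        psi1Kernel (pairing ν α) (pairing μ β) (μ j)
  coeff_wbV (j : Fin n) (α β : Fin n → ℕ) (h : (∑ t, α t) + (∑ t, β t) = 2) :
    coeff (mIdx α β (eIdx j) 0) ψ =
      -Complex.I * (c (α + eIdx j) β / (factM α * factM β : ℕ)) *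
        psi1Kernel (pairing μ β) (pairing ν α) (ν j)

/-- The polynomial `ψ₃²` attached to the weights `μ` (for `z` and `w`) and `ν` (for `z̄` and
`w̄`). -/
def psi2 : MvPolynomial (Var n) ℂ :=
  cubicSum (fun k j s => Complex.I * c (eIdx k) (eIdx j + eIdx s) *
      pureKernel (ν k) (μ j) (μ s)) zbV wV wV -
    cubicSum (fun k j s => Complex.I * c (eIdx j + eIdx s) (eIdx k) *
      pureKernel (μ k) (ν j) (ν s)) zV wbV wbV +
    cubicSum (fun k j s => Complex.I * c (eIdx k + eIdx j) (eIdx s) *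
      mixedKernel (μ s) (ν k) (ν j)) zbV wbV wV -
    cubicSum (fun k j s => Complex.I * c (eIdx j) (eIdx k + eIdx s) *
      mixedKernel (ν j) (μ k) (μ s)) zV wbV wV

lemma weightedField_psi2 :
    weightedField μ ν zV zbV (psi2 μ ν c) =
      cubicSum (fun k j s => 2 * Complex.I * ν k * (Complex.I * c (eIdx k) (eIdx j + eIdx s) *
        pureKernel (ν k) (μ j) (μ s))) zbV wV wV -
      cubicSum (fun k j s => 2 * Complex.I * μ k * (Complex.I * c (eIdx j + eIdx s) (eIdx k) *
        pureKernel (μ k) (ν j) (ν s))) zV wbV wbV +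
      cubicSum (fun k j s => 2 * Complex.I * ν k * (Complex.I * c (eIdx k + eIdx j) (eIdx s) *
        mixedKernel (μ s) (ν k) (ν j))) zbV wbV wV -
      cubicSum (fun k j s => 2 * Complex.I * μ k * (Complex.I * c (eIdx j) (eIdx k + eIdx s) *
        mixedKernel (ν j) (μ k) (μ s))) zV wbV wV := by
  have hz := weightedField_zV μ ν zV zbV
  have hzb := weightedField_zbV μ ν zV zbV
  have hw := weightedField_wV μ ν zV zbV
  have hwb := weightedField_wbV μ ν zV zbV
  rw [psi2, map_sub, map_add, map_sub, derivation_cubicSum _ _ hzb hw hw,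
    derivation_cubicSum _ _ hz hwb hwb, derivation_cubicSum _ _ hzb hwb hw,
    derivation_cubicSum _ _ hz hwb hw]

namespace IsPsi1

variable {μ ν c} {ψ : MvPolynomial (Var n) ℂ} {α β : Fin n → ℕ}

lemma coeff_wV_pderiv_zV (hψ : IsPsi1 μ ν c ψ) (h : (∑ t, α t) + (∑ t, β t) = 1) (j s : Fin n) :
    coeff (mIdx α β 0 (eIdx j)) (pderiv (zV s) ψ) =
      Complex.I * c α (β + eIdx s + eIdx j) *
        psi1Kernel (pairing ν α) (pairing μ β + μ s) (μ j) := by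
  rw [← pairing_eIdx μ s, ← pairing_add]
  exact coeff_pderiv_zV_of_factM h (hψ.coeff_wV j α (β + eIdx s) (by rw [sum_add_eIdx]; omega))

lemma coeff_wbV_pderiv_zV (hψ : IsPsi1 μ ν c ψ) (h : (∑ t, α t) + (∑ t, β t) = 1) (j s : Fin n) :
    coeff (mIdx α β (eIdx j) 0) (pderiv (zV s) ψ) =
      -Complex.I * c (α + eIdx j) (β + eIdx s) *
        psi1Kernel (pairing μ β + μ s) (pairing ν α) (ν j) := by
  rw [← pairing_eIdx μ s, ← pairing_add]
  exact coeff_pderiv_zV_of_factM h (hψ.coeff_wbV j α (β + eIdx s) (by rw [sum_add_eIdx]; omega))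

lemma coeff_wV_pderiv_zbV (hψ : IsPsi1 μ ν c ψ) (h : (∑ t, α t) + (∑ t, β t) = 1) (j s : Fin n) :
    coeff (mIdx α β 0 (eIdx j)) (pderiv (zbV s) ψ) =
      Complex.I * c (α + eIdx s) (β + eIdx j) *
        psi1Kernel (pairing ν α + ν s) (pairing μ β) (μ j) := by
  rw [← pairing_eIdx ν s, ← pairing_add]
  exact coeff_pderiv_zbV_of_factM h (hψ.coeff_wV j (α + eIdx s) β (by rw [sum_add_eIdx]; omega))

lemma coeff_wbV_pderiv_zbV (hψ : IsPsi1 μ ν c ψ) (h : (∑ t, α t) + (∑ t, β t) = 1) (j s : Fin n) :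
    coeff (mIdx α β (eIdx j) 0) (pderiv (zbV s) ψ) =
      -Complex.I * c (α + eIdx s + eIdx j) β *
        psi1Kernel (pairing μ β) (pairing ν α + ν s) (ν j) := by
  rw [← pairing_eIdx ν s, ← pairing_add]
  exact coeff_pderiv_zbV_of_factM h (hψ.coeff_wbV j (α + eIdx s) β (by rw [sum_add_eIdx]; omega))

lemma pderiv_zV_eq (hψ : IsPsi1 μ ν c ψ) (s : Fin n) :
    pderiv (zV s) ψ =
      bilinearSum (fun k j => Complex.I * c (eIdx k) (eIdx s + eIdx j) *
        psi1Kernel (ν k) (μ s) (μ j)) zbV wV +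
      bilinearSum (fun k j => -Complex.I * c (eIdx k + eIdx j) (eIdx s) *
        psi1Kernel (μ s) (ν k) (ν j)) zbV wbV +
      bilinearSum (fun k j => -Complex.I * c (eIdx j) (eIdx k + eIdx s) *
        psi1Kernel (μ k + μ s) 0 (ν j)) zV wbV := by
  conv_lhs => rw [(hψ.isBihomogeneous.pderiv_zV s).eq_bilinearSum]
  simp only [hψ.coeff_wV_pderiv_zV, hψ.coeff_wbV_pderiv_zV, sum_eIdx, Pi.zero_apply,
    Finset.sum_const_zero, add_zero, zero_add, pairing_eIdx, pairing_zero, psi1Kernel_zero_left,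
    Complex.ofReal_zero, mul_zero, bilinearSum_zero]

lemma pderiv_zbV_eq (hψ : IsPsi1 μ ν c ψ) (s : Fin n) :
    pderiv (zbV s) ψ =
      bilinearSum (fun k j => Complex.I * c (eIdx k + eIdx s) (eIdx j) *
        psi1Kernel (ν k + ν s) 0 (μ j)) zbV wV +
      bilinearSum (fun k j => Complex.I * c (eIdx s) (eIdx k + eIdx j) *
        psi1Kernel (ν s) (μ k) (μ j)) zV wV +
      bilinearSum (fun k j => -Complex.I * c (eIdx s + eIdx j) (eIdx k) *
        psi1Kernel (μ k) (ν s) (ν j)) zV wbV := by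
  conv_lhs => rw [(hψ.isBihomogeneous.pderiv_zbV s).eq_bilinearSum]
  simp only [hψ.coeff_wV_pderiv_zbV, hψ.coeff_wbV_pderiv_zbV, sum_eIdx, Pi.zero_apply,
    Finset.sum_const_zero, add_zero, zero_add, pairing_eIdx, pairing_zero, psi1Kernel_zero_left,
    Complex.ofReal_zero, mul_zero, bilinearSum_zero]

lemma weightedField_eq (hψ : IsPsi1 μ ν c ψ) :
    weightedField μ ν wV wbV ψ =
      cubicSum (fun k j s => 2 * Complex.I * μ s * (Complex.I * c (eIdx k) (eIdx s + eIdx j) *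
        psi1Kernel (ν k) (μ s) (μ j))) zbV wV wV +
      cubicSum (fun k j s => 2 * Complex.I * μ s * (-Complex.I * c (eIdx k + eIdx j) (eIdx s) *
        psi1Kernel (μ s) (ν k) (ν j))) zbV wbV wV +
      cubicSum (fun k j s => 2 * Complex.I * μ s * (-Complex.I * c (eIdx j) (eIdx k + eIdx s) *
        psi1Kernel (μ k + μ s) 0 (ν j))) zV wbV wV +
      (cubicSum (fun k j s => 2 * Complex.I * ν s * (Complex.I * c (eIdx k + eIdx s) (eIdx j) *
        psi1Kernel (ν k + ν s) 0 (μ j))) zbV wV wbV +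
      cubicSum (fun k j s => 2 * Complex.I * ν s * (Complex.I * c (eIdx s) (eIdx k + eIdx j) *
        psi1Kernel (ν s) (μ k) (μ j))) zV wV wbV +
      cubicSum (fun k j s => 2 * Complex.I * ν s * (-Complex.I * c (eIdx s + eIdx j) (eIdx k) *
        psi1Kernel (μ k) (ν s) (ν j))) zV wbV wbV) := by
  simp only [weightedField_apply, hψ.pderiv_zV_eq, hψ.pderiv_zbV_eq, mul_add,
    Finset.sum_add_distrib, sum_mul_bilinearSum]

end IsPsi1

variable {c} in
theorem statement4_general {μ ν : Fin n → ℝ} (hμ : 0 ≤ μ) (hν : 0 ≤ ν)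
    {ψ : MvPolynomial (Var n) ℂ} (hψ : IsPsi1 μ ν c ψ) :
    weightedField μ ν zV zbV (psi2 μ ν c) = weightedField μ ν wV wbV ψ := by
  have h_zbww := cubicSum_pureKernel μ ν (fun k j s => c (eIdx k) (eIdx j + eIdx s))
    (fun k j s => by rw [add_comm]) zbV wV
  have h_zwbwb := cubicSum_pureKernel ν μ (fun k j s => c (eIdx j + eIdx s) (eIdx k))
    (fun k j s => by rw [add_comm]) zV wbV
  have h_zwbw := cubicSum_mixedKernel hμ hν (fun k j s => c (eIdx j) (eIdx k + eIdx s)) zV wbV wV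
  have h_zbwwb := cubicSum_mixedKernel hν hμ (fun k j s => c (eIdx k + eIdx s) (eIdx j)) zbV wV wbV
  rw [weightedField_psi2, hψ.weightedField_eq, h_zbww, h_zwbwb, h_zwbw,
    cubicSum_swap _ zbV wbV wV, h_zbwwb]
  simp only [neg_mul, mul_neg, cubicSum_neg]
  rw [cubicSum_swap _ zV wV wbV, cubicSum_swap _ zbV wbV wV]
  simp only [add_comm (eIdx _) (eIdx _)]
  ring

end Weights

section SplitWeights

variable {n : ℕ} (q : ℕ) (lam : Fin n → ℝ)

/-- The weight vector `|λ'|`, extended by `0` to all indices. -/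
def leftWeight (j : Fin n) : ℝ := if (j : ℕ) < q then |lam j| else 0

/-- The weight vector `|λ''|`, extended by `0` to all indices. -/
def rightWeight (j : Fin n) : ℝ := if q ≤ (j : ℕ) then |lam j| else 0

lemma leftWeight_nonneg : 0 ≤ leftWeight q lam := fun j => by
  rw [leftWeight]
  split_ifs <;> simp

lemma rightWeight_nonneg : 0 ≤ rightWeight q lam := fun j => by
  rw [rightWeight]
  split_ifs <;> simp

lemma wB_eq_pairing (β : Fin n → ℕ) : wB q lam β = pairing (leftWeight q lam) β := by
  simp only [wB, pairing, leftWeight, ite_mul, zero_mul]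

lemma wA_eq_pairing (α : Fin n → ℕ) : wA q lam α = pairing (rightWeight q lam) α := by
  simp only [wA, pairing, rightWeight, ite_mul, zero_mul]

lemma sum_ite_eq_weightedField (a b : Fin n → Var n) (p : MvPolynomial (Var n) ℂ) :
    (∑ j : Fin n, if (j : ℕ) < q then
        C (2 * Complex.I * ((|lam j| : ℝ) : ℂ)) * X (a j) * pderiv (zV j) p
      else
        C (2 * Complex.I * ((|lam j| : ℝ) : ℂ)) * X (b j) * pderiv (zbV j) p) =
      weightedField (leftWeight q lam) (rightWeight q lam) a b p := by
  rw [weightedField_apply, ← Finset.sum_add_distrib]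
  refine Finset.sum_congr rfl fun j _ => ?_
  by_cases hj : (j : ℕ) < q
  · simp [leftWeight, rightWeight, hj]
  · simp [leftWeight, rightWeight, hj, not_lt.1 hj]

variable {q lam}

lemma pureKernel_rightWeight (hlam : ∀ j, lam j ≠ 0) (k j s : Fin n) :
    pureKernel (rightWeight q lam k) (leftWeight q lam j) (leftWeight q lam s) =
      if q ≤ (k : ℕ) ∧ (j : ℕ) < q ∧ (s : ℕ) < q then
        |lam j| * |lam s| / (|lam k| + |lam j| + |lam s|) *
          (1 / (|lam j| + |lam k|) + 1 / (|lam k| + |lam s|))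
      else 0 := by
  simp only [pureKernel, leftWeight, rightWeight, ← not_lt]
  by_cases hk : (k : ℕ) < q <;> by_cases hj : (j : ℕ) < q <;> by_cases hs : (s : ℕ) < q <;>
    simp only [hk, hj, hs] <;> simp [hlam k]

lemma pureKernel_leftWeight (hlam : ∀ j, lam j ≠ 0) (k j s : Fin n) :
    pureKernel (leftWeight q lam k) (rightWeight q lam j) (rightWeight q lam s) =
      if (k : ℕ) < q ∧ q ≤ (j : ℕ) ∧ q ≤ (s : ℕ) then
        |lam j| * |lam s| / (|lam k| + |lam j| + |lam s|) *
          (1 / (|lam j| + |lam k|) + 1 / (|lam k| + |lam s|))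
      else 0 := by
  simp only [pureKernel, leftWeight, rightWeight, ← not_lt]
  by_cases hk : (k : ℕ) < q <;> by_cases hj : (j : ℕ) < q <;> by_cases hs : (s : ℕ) < q <;>
    simp only [hk, hj, hs] <;> simp [hlam k]

lemma mixedKernel_leftWeight (hlam : ∀ j, lam j ≠ 0) (s k j : Fin n) :
    mixedKernel (leftWeight q lam j) (rightWeight q lam s) (rightWeight q lam k) =
      if q ≤ (s : ℕ) ∧ q ≤ (k : ℕ) ∧ (j : ℕ) < q then
        2 * |lam j| * |lam k| / ((|lam s| + |lam j|) * (|lam s| + |lam j| + |lam k|))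
      else 0 := by
  simp only [mixedKernel, psi1Kernel, leftWeight, rightWeight, ← not_lt]
  by_cases hk : (k : ℕ) < q <;> by_cases hj : (j : ℕ) < q <;> by_cases hs : (s : ℕ) < q <;>
    simp only [hk, hj, hs] <;> simp [hlam s]
  ring

lemma mixedKernel_rightWeight (hlam : ∀ j, lam j ≠ 0) (k j s : Fin n) :
    mixedKernel (rightWeight q lam k) (leftWeight q lam s) (leftWeight q lam j) =
      if q ≤ (k : ℕ) ∧ (j : ℕ) < q ∧ (s : ℕ) < q then
        2 * |lam j| * |lam k| / ((|lam s| + |lam k|) * (|lam s| + |lam j| + |lam k|))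
      else 0 := by
  simp only [mixedKernel, psi1Kernel, leftWeight, rightWeight, ← not_lt]
  by_cases hk : (k : ℕ) < q <;> by_cases hj : (j : ℕ) < q <;> by_cases hs : (s : ℕ) < q <;>
    simp only [hk, hj, hs] <;> simp [hlam s]
  ring

lemma psi32_eq_psi2 (hlam : ∀ j, lam j ≠ 0) (c : (Fin n → ℕ) → (Fin n → ℕ) → ℂ) :
    psi32 q lam c = psi2 (leftWeight q lam) (rightWeight q lam) c := by
  simp only [psi32, C_mul_sum_ite_eq_cubicSum]
  rw [Finset.sum_comm_cycle, C_mul_sum_ite_eq_cubicSum, psi2]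
  simp only [pureKernel_leftWeight hlam, pureKernel_rightWeight hlam,
    mixedKernel_leftWeight hlam, mixedKernel_rightWeight hlam, apply_ite Complex.ofReal,
    Complex.ofReal_zero]
  rfl

lemma wA_eq_zero {α : Fin n → ℕ} (h : ∀ t : Fin n, q ≤ (t : ℕ) → α t = 0) : wA q lam α = 0 :=
  Finset.sum_eq_zero fun t _ => by by_cases ht : q ≤ (t : ℕ) <;> simp [ht, h t]

lemma wB_eq_zero {β : Fin n → ℕ} (h : ∀ t : Fin n, (t : ℕ) < q → β t = 0) : wB q lam β = 0 :=
  Finset.sum_eq_zero fun t _ => by by_cases ht : (t : ℕ) < q <;> simp [ht, h t]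

variable {c : (Fin n → ℕ) → (Fin n → ℕ) → ℂ} {ψ : MvPolynomial (Var n) ℂ}

lemma isPsi1_of_coeff
    (h_wV : ∀ (j : Fin n), (j : ℕ) < q → ∀ α β : Fin n → ℕ, (∑ t, α t) + (∑ t, β t) = 2 →
      coeff (mIdx α β 0 (eIdx j)) ψ =
        if ¬ (∀ t : Fin n, q ≤ (t : ℕ) → α t = 0) then
          Complex.I * (c α (β + eIdx j) / (factM α * factM β : ℕ)) *
            ((2 * |lam j| * wA q lam α /
              ((wA q lam α + wB q lam β) * (wA q lam α + wB q lam β + |lam j|)) : ℝ) : ℂ)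
        else 0)
    (h_wbV : ∀ (j : Fin n), q ≤ (j : ℕ) → ∀ α β : Fin n → ℕ, (∑ t, α t) + (∑ t, β t) = 2 →
      coeff (mIdx α β (eIdx j) 0) ψ =
        if ¬ (∀ t : Fin n, (t : ℕ) < q → β t = 0) then
          -Complex.I * (c (α + eIdx j) β / (factM α * factM β : ℕ)) *
            ((2 * |lam j| * wB q lam β /
              ((wA q lam α + wB q lam β) * (wA q lam α + wB q lam β + |lam j|)) : ℝ) : ℂ)
        else 0)
    (h_zero : ∀ α β γ δ : Fin n → ℕ,
      ¬ ((∑ t, α t) + (∑ t, β t) = 2 ∧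
          ((∃ j : Fin n, (j : ℕ) < q ∧ γ = 0 ∧ δ = eIdx j) ∨
           (∃ j : Fin n, q ≤ (j : ℕ) ∧ δ = 0 ∧ γ = eIdx j))) →
      coeff (mIdx α β γ δ) ψ = 0) :
    IsPsi1 (leftWeight q lam) (rightWeight q lam) c ψ where
  isBihomogeneous α β γ δ h := by
    obtain ⟨h_deg, ⟨j, -, rfl, rfl⟩ | ⟨j, -, rfl, rfl⟩⟩ := not_imp_comm.1 (h_zero α β γ δ) h <;>
      simp [h_deg, sum_eIdx]
  coeff_wV j α β h := by
    rw [← wA_eq_pairing, ← wB_eq_pairing]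
    by_cases hj : (j : ℕ) < q
    · rw [h_wV j hj α β h, leftWeight, if_pos hj]
      split_ifs with hα
      · simp [wA_eq_zero hα, psi1Kernel_zero_left]
      · rfl
    · rw [h_zero, leftWeight, if_neg hj]
      · simp [psi1Kernel]
      · rintro ⟨-, ⟨i, hi, -, hij⟩ | ⟨i, -, hij, -⟩⟩
        · exact hj (eIdx_injective hij ▸ hi)
        · exact eIdx_ne_zero j hij
  coeff_wbV j α β h := by
    rw [← wA_eq_pairing, ← wB_eq_pairing]
    by_cases hj : q ≤ (j : ℕ)
    · rw [h_wbV j hj α β h, rightWeight, if_pos hj]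
      split_ifs with hβ
      · simp [wB_eq_zero hβ, psi1Kernel_zero_left]
      · rw [psi1Kernel, add_comm (wB q lam β)]
    · rw [h_zero, rightWeight, if_neg hj]
      · simp [psi1Kernel]
      · rintro ⟨-, ⟨i, -, hij, -⟩ | ⟨i, hi, -, hij⟩⟩
        · exact eIdx_ne_zero j hij
        · exact hj (eIdx_injective hij ▸ hi)

end SplitWeights

/-- `T ψ₃² = Σ_{j≤q} 2i|λ_j| w_j ∂ψ₃¹/∂z_j + Σ_{j>q} 2i|λ_j| w̄_j ∂ψ₃¹/∂z̄_j`,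
where `ψ₃¹` is described through its coefficients. -/
theorem statement4 (n q : ℕ) (hn : 1 ≤ n) (hq : q ≤ n) (lam : Fin n → ℝ)
    (hneg : ∀ j : Fin n, (j : ℕ) < q → lam j < 0)
    (hpos : ∀ j : Fin n, q ≤ (j : ℕ) → 0 < lam j)
    (c : (Fin n → ℕ) → (Fin n → ℕ) → ℂ)
    (ψ₃₁ : MvPolynomial (Var n) ℂ)
    (hψ1a : ∀ (j : Fin n), (j : ℕ) < q → ∀ α β : Fin n → ℕ,
      (∑ t, α t) + (∑ t, β t) = 2 →
      coeff (mIdx α β 0 (eIdx j)) ψ₃₁ =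
        if ¬ (∀ t : Fin n, q ≤ (t : ℕ) → α t = 0) then
          Complex.I * (c α (fun t => β t + eIdx j t) / ((factM α * factM β : ℕ) : ℂ)) *
            ((2 * |lam j| * wA q lam α /
              ((wA q lam α + wB q lam β) * (wA q lam α + wB q lam β + |lam j|)) : ℝ) : ℂ)
        else 0)
    (hψ1b : ∀ (j : Fin n), q ≤ (j : ℕ) → ∀ α β : Fin n → ℕ,
      (∑ t, α t) + (∑ t, β t) = 2 →
      coeff (mIdx α β (eIdx j) 0) ψ₃₁ =
        if ¬ (∀ t : Fin n, (t : ℕ) < q → β t = 0) then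
          - Complex.I * (c (fun t => α t + eIdx j t) β / ((factM α * factM β : ℕ) : ℂ)) *
            ((2 * |lam j| * wB q lam β /
              ((wA q lam α + wB q lam β) * (wA q lam α + wB q lam β + |lam j|)) : ℝ) : ℂ)
        else 0)
    (hψ1c : ∀ α β γ δ : Fin n → ℕ,
      ¬ ((∑ t, α t) + (∑ t, β t) = 2 ∧
          ((∃ j : Fin n, (j : ℕ) < q ∧ γ = 0 ∧ δ = eIdx j) ∨
           (∃ j : Fin n, q ≤ (j : ℕ) ∧ δ = 0 ∧ γ = eIdx j))) →
      coeff (mIdx α β γ δ) ψ₃₁ = 0) :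
    Tder q lam (psi32 q lam c) =
      ∑ j : Fin n,
        (if (j : ℕ) < q then
          C (2 * Complex.I * ((|lam j| : ℝ) : ℂ)) * X (wV j) * pderiv (zV j) ψ₃₁
        else
          C (2 * Complex.I * ((|lam j| : ℝ) : ℂ)) * X (wbV j) * pderiv (zbV j) ψ₃₁) := by
  have hlam (j : Fin n) : lam j ≠ 0 :=
    (lt_or_ge (j : ℕ) q).elim (fun hj => (hneg j hj).ne) fun hj => (hpos j hj).ne'
  rw [Tder, sum_ite_eq_weightedField, sum_ite_eq_weightedField, psi32_eq_psi2 hlam]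
  exact statement4_general (leftWeight_nonneg q lam) (rightWeight_nonneg q lam)
    (isPsi1_of_coeff hψ1a hψ1b hψ1c)
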